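/- For every integer L ≥ 0, the generating function of Type-1 partitions with all subscripts at most L satisfies \sum_{π} A^{ν_a(π)} B^{ν_b(π)} (AB)^{ν_{ab}(π)} q^{σ(π)} = \sum_{i, j ≥ 0, i+j ≤ L} A^i B^j q^{T_i + T_j} \binom{L}{i, j, L-i-j}_q, where the left sum is over all Type-1 partitions π whose largest part is at most the symbol b_L (equivalently, every subscript is ≤ L), σ(π) is the sum of the subscripts of π, and ν_a(π), ν_b(π), ν_{ab}(π) are the numbers of parts of π of colors a, b, ab respectively; this is an identity of polynomials in A, B, q. -/

import Mathlib

open Finset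

/-- The three colors `a`, `b`, `ab` of the Alladi–Gordon weighted words. -/
inductive PColor | a | b | ab
deriving DecidableEq

/-- A colored part: a color together with a subscript. -/
abbrev CPart := PColor × ℕ

/-- A Type-1 partition: a list of valid colored symbols (`a_m, b_m` for `m ≥ 1`,
`ab_m` for `m ≥ 2`) whose subscripts decrease with gap `≥ 1` between consecutive
symbols, the gap being `≥ 2` when the larger symbol has color `ab`, or the larger
symbol has color `a` and the smaller one has color `b`. -/
def IsType1 (π : List CPart) : Prop :=
  (∀ p ∈ π, 1 ≤ p.2 ∧ (p.1 = PColor.ab → 2 ≤ p.2)) ∧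
  π.Chain' (fun x y => y.2 + 1 ≤ x.2 ∧
    ((x.1 = PColor.ab ∨ (x.1 = PColor.a ∧ y.1 = PColor.b)) → y.2 + 2 ≤ x.2))

/-- Number of parts of a given color. -/
def colorCount (c : PColor) (π : List CPart) : ℕ := (π.filter (fun p => p.1 = c)).length

/-- The sum of the subscripts. -/
def wt (π : List CPart) : ℕ := (π.map Prod.snd).sum

/-- The field `ℚ(A, B, q)` of rational functions in three variables. -/
abbrev K3 := FractionRing (MvPolynomial (Fin 3) ℚ)

/-- The variable `A`. -/
noncomputable def Av : K3 := algebraMap (MvPolynomial (Fin 3) ℚ) K3 (MvPolynomial.X 0)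
/-- The variable `B`. -/
noncomputable def Bv : K3 := algebraMap (MvPolynomial (Fin 3) ℚ) K3 (MvPolynomial.X 1)
/-- The variable `q`. -/
noncomputable def qv : K3 := algebraMap (MvPolynomial (Fin 3) ℚ) K3 (MvPolynomial.X 2)

/-- `(x; x)_n = ∏_{t=0}^{n-1} (1 - x^{t+1})`. -/
noncomputable def pochK (x : K3) (n : ℕ) : K3 := ∏ t ∈ Finset.range n, (1 - x ^ (t + 1))

/-- The q-multinomial coefficient of order 3 with base `x`, set to `0` if any lower
argument is negative. -/
noncomputable def trinK (x : K3) (u v w : ℤ) : K3 :=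
  if 0 ≤ u ∧ 0 ≤ v ∧ 0 ≤ w then
    pochK x (u + v + w).toNat / (pochK x u.toNat * pochK x v.toNat * pochK x w.toNat) else 0

/-- `T n = n(n+1)/2`, the n-th triangular number. -/
def tri (n : ℕ) : ℕ := n * (n + 1) / 2

/-!
Give the symbols `ab_m`, `a_m`, `b_m` the ranks `3m`, `3m+1`, `3m+2`.  The Type-1 gap conditions
then say that consecutive ranks differ by at least `4` after an `ab` and by at least `3` otherwise.
Splitting off the largest part gives a recursion in the bound on the rank for the generating
function, and four instances of it combine, for the generating function `G_L` with subscripts at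
most `L`, into
`G_{L+2} = (1 + (A+B) q^{L+2}) G_{L+1} + A B q^{L+2} (1 - q^{L+1}) G_L`.

The trinomial sums divided by `(q)_L` are the coefficients of `F(z) = E(Az) E(Bz) e(z)`, where `e`
and `E` are Euler's two `q`-exponentials.  Their functional equations give
`(1 - z) F(z) = (1 + Aqz) (1 + Bqz) F(qz)`, and comparing coefficients yields the same recurrence.
-/

section Rank

/-- The condition for a colored part to be one of the symbols `a_m`, `b_m` (`m ≥ 1`) and
`ab_m` (`m ≥ 2`). -/
def IsSymbol (p : CPart) : Prop := 1 ≤ p.2 ∧ (p.1 = PColor.ab → 2 ≤ p.2)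

/-- The position of a symbol in the total order `a_1 < b_1 < ab_2 < a_2 < ⋯`; the smallest
symbol `a_1` has rank `4`. -/
def symbolRank : CPart → ℕ
  | (PColor.ab, m) => 3 * m
  | (PColor.a, m) => 3 * m + 1
  | (PColor.b, m) => 3 * m + 2

/-- The least difference in rank between a part of the given color and the next smaller part of
a Type-1 partition. -/
def rankGap : PColor → ℕ
  | PColor.ab => 4
  | PColor.a => 3
  | PColor.b => 3

lemma symbolRank_injective : Function.Injective symbolRank := by
  rintro ⟨_ | _ | _, m⟩ ⟨_ | _ | _, n⟩ h <;> grind [symbolRank]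

lemma symbolRank_le_iff (p : CPart) (L : ℕ) : symbolRank p ≤ 3 * L + 2 ↔ p.2 ≤ L := by
  rcases p with ⟨_ | _ | _, m⟩ <;> simp only [symbolRank] <;> omega

lemma IsSymbol.four_le_symbolRank {p : CPart} (hp : IsSymbol p) : 4 ≤ symbolRank p := by
  rcases p with ⟨_ | _ | _, m⟩ <;> grind [IsSymbol, symbolRank]

lemma rankGap_le_four (c : PColor) : rankGap c ≤ 4 := by
  cases c <;> simp [rankGap]

lemma rankGap_pos (c : PColor) : 0 < rankGap c := by
  cases c <;> simp [rankGap]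

lemma exists_isSymbol_symbolRank_eq {n : ℕ} (hn : 4 ≤ n) : ∃ p, IsSymbol p ∧ symbolRank p = n := by
  obtain h | h | h : n % 3 = 0 ∨ n % 3 = 1 ∨ n % 3 = 2 := by omega
  · exact ⟨(PColor.ab, n / 3), by grind [IsSymbol], by grind [symbolRank]⟩
  · exact ⟨(PColor.a, n / 3), by grind [IsSymbol], by grind [symbolRank]⟩
  · exact ⟨(PColor.b, n / 3), by grind [IsSymbol], by grind [symbolRank]⟩

lemma type1_gap_iff (x y : CPart) :
    (y.2 + 1 ≤ x.2 ∧
      ((x.1 = PColor.ab ∨ (x.1 = PColor.a ∧ y.1 = PColor.b)) → y.2 + 2 ≤ x.2)) ↔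
    symbolRank y + rankGap x.1 ≤ symbolRank x := by
  rcases x with ⟨_ | _ | _, m⟩ <;> rcases y with ⟨_ | _ | _, k⟩ <;>
    simp [symbolRank, rankGap] <;> omega

lemma isType1_iff_pairwise (π : List CPart) :
    IsType1 π ↔ (∀ p ∈ π, IsSymbol p) ∧
      π.Pairwise fun x y ↦ symbolRank y + rankGap x.1 ≤ symbolRank x := by
  have : IsTrans CPart fun x y ↦ symbolRank y + rankGap x.1 ≤ symbolRank x :=
    ⟨fun _ _ _ _ _ ↦ by omega⟩
  simp only [IsType1, type1_gap_iff]
  exact and_congr_right fun _ ↦ List.isChain_iff_pairwise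

lemma isType1_nil : IsType1 [] := by
  simp [isType1_iff_pairwise]

lemma isType1_cons (x : CPart) (π : List CPart) :
    IsType1 (x :: π) ↔
      IsSymbol x ∧ (∀ y ∈ π, symbolRank y + rankGap x.1 ≤ symbolRank x) ∧ IsType1 π := by
  simp only [isType1_iff_pairwise, List.forall_mem_cons, List.pairwise_cons]
  tauto

end Rank

section BoundedRank

/-- The Type-1 partitions all of whose parts have rank at most `n`. -/
def type1RankLE (n : ℕ) : Set (List CPart) := {π | IsType1 π ∧ ∀ p ∈ π, symbolRank p ≤ n}

lemma type1RankLE_eq_setOf_le (L : ℕ) :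
    type1RankLE (3 * L + 2) = {π | IsType1 π ∧ ∀ p ∈ π, p.2 ≤ L} := by
  simp only [type1RankLE, symbolRank_le_iff]

lemma nil_mem_type1RankLE (n : ℕ) : [] ∈ type1RankLE n :=
  ⟨isType1_nil, by simp⟩

lemma cons_mem_type1RankLE_iff (x : CPart) (π : List CPart) (n : ℕ) :
    x :: π ∈ type1RankLE n ↔
      IsSymbol x ∧ symbolRank x ≤ n ∧ π ∈ type1RankLE (symbolRank x - rankGap x.1) := by
  simp only [type1RankLE, Set.mem_ofPred_eq, isType1_cons, List.forall_mem_cons]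
  constructor
  · rintro ⟨⟨hx, hgap, hπ⟩, hxn, -⟩
    exact ⟨hx, hxn, hπ, fun y hy ↦ Nat.le_sub_of_add_le (hgap y hy)⟩
  · rintro ⟨hx, hxn, hπ, hle⟩
    have hgap := (rankGap_le_four x.1).trans hx.four_le_symbolRank
    exact ⟨⟨hx, fun y hy ↦ (Nat.le_sub_iff_add_le hgap).1 (hle y hy), hπ⟩, hxn,
      fun y hy ↦ (hle y hy).trans ((Nat.sub_le _ _).trans hxn)⟩

lemma type1RankLE_of_lt_four {n : ℕ} (hn : n < 4) : type1RankLE n = {[]} := by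
  ext π
  rcases π with _ | ⟨x, π⟩
  · simp [nil_mem_type1RankLE]
  · simp only [cons_mem_type1RankLE_iff, Set.mem_singleton_iff, reduceCtorEq, iff_false]
    rintro ⟨hx, hxn, -⟩
    exact (hx.four_le_symbolRank.trans hxn).not_gt hn

lemma type1RankLE_symbolRank {x : CPart} (hx : IsSymbol x) :
    type1RankLE (symbolRank x) =
      type1RankLE (symbolRank x - 1) ∪
        List.cons x '' type1RankLE (symbolRank x - rankGap x.1) := by
  ext π
  rcases π with _ | ⟨y, π⟩
  · simp [nil_mem_type1RankLE]
  have hpos := hx.four_le_symbolRank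
  have hrank : symbolRank y ≤ symbolRank x ↔ symbolRank y ≤ symbolRank x - 1 ∨ x = y := by
    rw [← symbolRank_injective.eq_iff]
    omega
  simp only [Set.mem_union, Set.mem_image, cons_mem_type1RankLE_iff, hrank, List.cons.injEq]
  constructor
  · rintro ⟨hy, hlt | rfl, hπ⟩
    · exact .inl ⟨hy, hlt, hπ⟩
    · exact .inr ⟨π, hπ, rfl, rfl⟩
  · rintro (⟨hy, hlt, hπ⟩ | ⟨_, hπ, rfl, rfl⟩)
    · exact ⟨hy, .inl hlt, hπ⟩
    · exact ⟨hx, .inr rfl, hπ⟩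

lemma disjoint_type1RankLE_image_cons {x : CPart} (hx : IsSymbol x) (s : Set (List CPart)) :
    Disjoint (type1RankLE (symbolRank x - 1)) (List.cons x '' s) := by
  rw [Set.disjoint_left]
  rintro _ hmem ⟨π, -, rfl⟩
  have hle := hmem.2 x List.mem_cons_self
  have hpos := hx.four_le_symbolRank
  omega

lemma finite_type1RankLE (n : ℕ) : (type1RankLE n).Finite := by
  induction n using Nat.strong_induction_on with
  | _ n ih =>
    obtain hn | hn := lt_or_ge n 4
    · rw [type1RankLE_of_lt_four hn]
      exact Set.finite_singleton _
    · obtain ⟨x, hx, rfl⟩ := exists_isSymbol_symbolRank_eq hn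
      have hgap := rankGap_pos x.1
      rw [type1RankLE_symbolRank hx]
      exact (ih _ (by omega)).union ((ih _ (by omega)).image _)

end BoundedRank

section GeneratingFunction

section CommSemiring

variable {R : Type*} [CommSemiring R] (A B q : R)

/-- The weight `A`, `B` or `AB` attached to a color. -/
def colorWeight : PColor → R
  | PColor.a => A
  | PColor.b => B
  | PColor.ab => A * B

/-- The monomial `A^{ν_a} B^{ν_b} (AB)^{ν_{ab}} q^σ` of a list of colored parts. -/
def type1Weight (π : List CPart) : R :=
  A ^ colorCount PColor.a π * B ^ colorCount PColor.b π * (A * B) ^ colorCount PColor.ab π *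
    q ^ wt π

/-- The generating function of the Type-1 partitions with parts of rank at most `n`. -/
noncomputable def type1GenFun (n : ℕ) : R := ∑ᶠ π ∈ type1RankLE n, type1Weight A B q π

lemma type1Weight_nil : type1Weight A B q [] = 1 := by
  simp [type1Weight, colorCount, wt]

lemma type1Weight_cons (x : CPart) (π : List CPart) :
    type1Weight A B q (x :: π) = colorWeight A B x.1 * q ^ x.2 * type1Weight A B q π := by
  rcases x with ⟨_ | _ | _, m⟩ <;>
    simp [type1Weight, colorCount, wt, colorWeight, pow_add] <;> ring

lemma finsum_mem_image_cons_type1Weight (x : CPart) {s : Set (List CPart)} (hs : s.Finite) :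
    ∑ᶠ π ∈ List.cons x '' s, type1Weight A B q π =
      colorWeight A B x.1 * q ^ x.2 * ∑ᶠ π ∈ s, type1Weight A B q π := by
  rw [finsum_mem_image List.cons_injective.injOn, mul_finsum_mem' _ _ hs]
  simp only [type1Weight_cons]

lemma type1GenFun_of_lt_four {n : ℕ} (hn : n < 4) : type1GenFun A B q n = 1 := by
  rw [type1GenFun, type1RankLE_of_lt_four hn, finsum_mem_singleton, type1Weight_nil]

lemma type1GenFun_symbolRank {x : CPart} (hx : IsSymbol x) :
    type1GenFun A B q (symbolRank x) =
      type1GenFun A B q (symbolRank x - 1) +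
        colorWeight A B x.1 * q ^ x.2 * type1GenFun A B q (symbolRank x - rankGap x.1) := by
  simp only [type1GenFun]
  rw [type1RankLE_symbolRank hx,
    finsum_mem_union (disjoint_type1RankLE_image_cons hx _) (finite_type1RankLE _)
      ((finite_type1RankLE _).image _),
    finsum_mem_image_cons_type1Weight A B q x (finite_type1RankLE _)]

lemma type1GenFun_rank_b (m : ℕ) :
    type1GenFun A B q (3 * m + 5) =
      type1GenFun A B q (3 * m + 4) + B * q ^ (m + 1) * type1GenFun A B q (3 * m + 2) :=
  type1GenFun_symbolRank A B q (x := (PColor.b, m + 1)) ⟨by simp, by simp⟩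

lemma type1GenFun_rank_a (m : ℕ) :
    type1GenFun A B q (3 * m + 4) =
      type1GenFun A B q (3 * m + 3) + A * q ^ (m + 1) * type1GenFun A B q (3 * m + 1) :=
  type1GenFun_symbolRank A B q (x := (PColor.a, m + 1)) ⟨by simp, by simp⟩

lemma type1GenFun_rank_ab (m : ℕ) :
    type1GenFun A B q (3 * m + 6) =
      type1GenFun A B q (3 * m + 5) + A * B * q ^ (m + 2) * type1GenFun A B q (3 * m + 2) :=
  type1GenFun_symbolRank A B q (x := (PColor.ab, m + 2)) ⟨by simp, by simp⟩

lemma type1GenFun_five : type1GenFun A B q 5 = 1 + (A + B) * q := by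
  have hb := type1GenFun_rank_b A B q 0
  have ha := type1GenFun_rank_a A B q 0
  simp only [mul_zero, zero_add, pow_one, type1GenFun_of_lt_four A B q (show 1 < 4 by simp),
    type1GenFun_of_lt_four A B q (show 2 < 4 by simp),
    type1GenFun_of_lt_four A B q (show 3 < 4 by simp)] at ha hb
  rw [hb, ha]
  ring

end CommSemiring

lemma type1GenFun_recurrence {R : Type*} [CommRing R] (A B q : R) (L : ℕ) :
    type1GenFun A B q (3 * (L + 2) + 2) =
      (1 + (A + B) * q ^ (L + 2)) * type1GenFun A B q (3 * (L + 1) + 2) +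
        A * B * q ^ (L + 2) * (1 - q ^ (L + 1)) * type1GenFun A B q (3 * L + 2) := by
  have hb := type1GenFun_rank_b A B q (L + 1)
  have ha := type1GenFun_rank_a A B q (L + 1)
  have hab := type1GenFun_rank_ab A B q L
  have hb' := type1GenFun_rank_b A B q L
  simp only [mul_add, mul_one, add_assoc, Nat.reduceAdd, Nat.reduceMul] at hb ha hab hb' ⊢
  linear_combination hb + ha + hab - A * q ^ (L + 2) * hb'

end GeneratingFunction

section QPochhammer

variable {R : Type*} [CommRing R] {q : R}

/-- The `q`-Pochhammer symbol `(q; q)_n`. -/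
def qPochhammer (q : R) (n : ℕ) : R := ∏ t ∈ range n, (1 - q ^ (t + 1))

lemma qPochhammer_zero (q : R) : qPochhammer q 0 = 1 := prod_range_zero _

lemma qPochhammer_succ (q : R) (n : ℕ) :
    qPochhammer q (n + 1) = qPochhammer q n * (1 - q ^ (n + 1)) :=
  prod_range_succ _ _

lemma one_sub_pow_succ_ne_zero (hq : ¬IsOfFinOrder q) (n : ℕ) : 1 - q ^ (n + 1) ≠ 0 :=
  fun h ↦ hq (isOfFinOrder_iff_pow_eq_one.2 ⟨n + 1, n.succ_pos, (sub_eq_zero.1 h).symm⟩)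

lemma qPochhammer_ne_zero [IsDomain R] (hq : ¬IsOfFinOrder q) (n : ℕ) : qPochhammer q n ≠ 0 :=
  prod_ne_zero_iff.2 fun t _ ↦ one_sub_pow_succ_ne_zero hq t

end QPochhammer

section QExponential

lemma tri_succ (n : ℕ) : tri (n + 1) = tri n + (n + 1) := by
  rw [tri, show (n + 1) * (n + 1 + 1) = n * (n + 1) + (n + 1) * 2 by ring,
    Nat.add_mul_div_right _ _ two_pos, tri]

open PowerSeries

variable {K : Type*} [Field K] {q : K}

/-- Euler's first `q`-exponential `e(z) = ∑ z^n / (q)_n`. -/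
def qExp (q : K) : K⟦X⟧ := .mk fun n ↦ (qPochhammer q n)⁻¹

/-- Euler's second `q`-exponential `E(z) = ∑ q^{T_n} z^n / (q)_n`. -/
def qExpTri (q : K) : K⟦X⟧ := .mk fun n ↦ q ^ tri n / qPochhammer q n

lemma rescale_qExp (hq : ¬IsOfFinOrder q) : rescale q (qExp q) = (1 - X) * qExp q := by
  ext n
  rw [sub_mul, one_mul, map_sub, coeff_rescale]
  cases n with
  | zero => simp
  | succ n =>
    rw [coeff_succ_X_mul]
    simp only [qExp, coeff_mk, qPochhammer_succ]
    have hn := qPochhammer_ne_zero hq n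
    have hq' := one_sub_pow_succ_ne_zero hq n
    field_simp
    ring

lemma qExpTri_eq_rescale (hq : ¬IsOfFinOrder q) :
    qExpTri q = rescale q ((1 + X) * qExpTri q) := by
  ext n
  rw [coeff_rescale, add_mul, one_mul, map_add]
  cases n with
  | zero => simp
  | succ n =>
    rw [coeff_succ_X_mul]
    simp only [qExpTri, coeff_mk, qPochhammer_succ, tri_succ]
    have hn := qPochhammer_ne_zero hq n
    have hq' := one_sub_pow_succ_ne_zero hq n
    field_simp
    ring

lemma rescale_qExpTri_eq_mul_rescale (hq : ¬IsOfFinOrder q) (c : K) :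
    rescale c (qExpTri q) = (1 + C (c * q) * X) * rescale q (rescale c (qExpTri q)) := by
  conv_lhs => rw [qExpTri_eq_rescale hq]
  rw [rescale_rescale, rescale_rescale, map_mul, map_add, map_one, rescale_X, mul_comm q c]

end QExponential

section TrinomialSum

open PowerSeries

lemma coeff_succ_one_add_C_mul_X_mul {R : Type*} [CommSemiring R] (c : R) (f : R⟦X⟧)
    (n : ℕ) :
    coeff (n + 1) ((1 + C c * X) * f) = coeff (n + 1) f + c * coeff n f := by
  rw [add_mul, one_mul, map_add, mul_assoc, coeff_C_mul, coeff_succ_X_mul]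

variable {K : Type*} [Field K] {q : K}

/-- The product `F(z) = E(Az) E(Bz) e(z)`. -/
noncomputable def qExpProduct (A B q : K) : K⟦X⟧ :=
  rescale A (qExpTri q) * (rescale B (qExpTri q) * qExp q)

/-- The `q`-multinomial coefficient of order 3, with lower arguments `u`, `v`, `w` and upper
argument `u + v + w`. -/
def qTrinomial (q : K) (u v w : ℕ) : K :=
  qPochhammer q (u + v + w) / (qPochhammer q u * qPochhammer q v * qPochhammer q w)

/-- The sum `∑_{i + j ≤ L} A^i B^j q^{T_i + T_j} [L; i, j, L - i - j]_q`. -/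
def qTrinomialSum (A B q : K) (L : ℕ) : K :=
  ∑ i ∈ range (L + 1), ∑ j ∈ range (L + 1 - i),
    A ^ i * B ^ j * q ^ (tri i + tri j) * qTrinomial q i j (L - i - j)

lemma qPochhammer_mul_coeff_qExpProduct (A B q : K) (L : ℕ) :
    qPochhammer q L * coeff L (qExpProduct A B q) = qTrinomialSum A B q L := by
  rw [qExpProduct, coeff_mul, Nat.sum_antidiagonal_eq_sum_range_succ_mk, mul_sum, qTrinomialSum]
  refine sum_congr rfl fun i hi ↦ ?_
  have hi : i ≤ L := mem_range_succ_iff.1 hi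
  rw [coeff_mul, Nat.sum_antidiagonal_eq_sum_range_succ_mk, mul_sum, mul_sum, Nat.sub_add_comm hi]
  refine sum_congr rfl fun j hj ↦ ?_
  have hj : j ≤ L - i := mem_range_succ_iff.1 hj
  have hL : i + j + (L - i - j) = L := by omega
  simp only [coeff_rescale, qExp, qExpTri, coeff_mk, qTrinomial, hL]
  ring

lemma one_sub_X_mul_qExpProduct (A B : K) (hq : ¬IsOfFinOrder q) :
    (1 - X) * qExpProduct A B q =
      (1 + C (A * q) * X) * (1 + C (B * q) * X) * rescale q (qExpProduct A B q) := by
  calc (1 - X) * qExpProduct A B q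
    _ = rescale A (qExpTri q) * (rescale B (qExpTri q) * rescale q (qExp q)) := by
      rw [rescale_qExp hq, qExpProduct]
      ring
    _ = (1 + C (A * q) * X) * (1 + C (B * q) * X) * rescale q (qExpProduct A B q) := by
      conv_lhs =>
        rw [rescale_qExpTri_eq_mul_rescale hq A, rescale_qExpTri_eq_mul_rescale hq B]
      rw [qExpProduct, map_mul (rescale q), map_mul (rescale q)]
      ring

lemma coeff_one_qExpProduct (A B : K) (hq : ¬IsOfFinOrder q) :
    (1 - q) * coeff 1 (qExpProduct A B q) =
      (1 + (A + B) * q) * coeff 0 (qExpProduct A B q) := by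
  have h := congrArg (coeff 1) (one_sub_X_mul_qExpProduct A B hq)
  rw [mul_assoc, sub_mul, one_mul, map_sub] at h
  simp only [coeff_succ_X_mul, coeff_rescale, add_mul, one_mul, mul_assoc, map_add, coeff_C_mul,
    coeff_zero_X_mul] at h
  linear_combination h

lemma coeff_qExpProduct_recurrence (A B : K) (hq : ¬IsOfFinOrder q) (n : ℕ) :
    (1 - q ^ (n + 2)) * coeff (n + 2) (qExpProduct A B q) =
      (1 + (A + B) * q ^ (n + 2)) * coeff (n + 1) (qExpProduct A B q) +
        A * B * q ^ (n + 2) * coeff n (qExpProduct A B q) := by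
  have h := congrArg (coeff (n + 2)) (one_sub_X_mul_qExpProduct A B hq)
  rw [mul_assoc, sub_mul, one_mul, map_sub] at h
  simp only [coeff_succ_one_add_C_mul_X_mul, coeff_succ_X_mul, coeff_rescale] at h
  linear_combination h

lemma qTrinomialSum_zero (A B q : K) : qTrinomialSum A B q 0 = 1 := by
  simp [qTrinomialSum, qTrinomial, qPochhammer_zero, tri]

lemma qTrinomialSum_one (A B : K) (hq : ¬IsOfFinOrder q) :
    qTrinomialSum A B q 1 = 1 + (A + B) * q := by
  have h := coeff_one_qExpProduct A B hq
  have h0 := qPochhammer_mul_coeff_qExpProduct A B q 0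
  rw [qTrinomialSum_zero, qPochhammer_zero] at h0
  rw [← qPochhammer_mul_coeff_qExpProduct, qPochhammer_succ, qPochhammer_zero]
  linear_combination h + (1 + (A + B) * q) * h0

lemma qTrinomialSum_recurrence (A B : K) (hq : ¬IsOfFinOrder q) (L : ℕ) :
    qTrinomialSum A B q (L + 2) =
      (1 + (A + B) * q ^ (L + 2)) * qTrinomialSum A B q (L + 1) +
        A * B * q ^ (L + 2) * (1 - q ^ (L + 1)) * qTrinomialSum A B q L := by
  simp only [← qPochhammer_mul_coeff_qExpProduct, qPochhammer_succ]
  linear_combination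
    qPochhammer q L * (1 - q ^ (L + 1)) * coeff_qExpProduct_recurrence A B hq L

end TrinomialSum

lemma type1GenFun_eq_qTrinomialSum {K : Type*} [Field K] (A B : K) {q : K} (hq : ¬IsOfFinOrder q)
    (L : ℕ) : type1GenFun A B q (3 * L + 2) = qTrinomialSum A B q L := by
  induction L using Nat.twoStepInduction with
  | zero => rw [type1GenFun_of_lt_four A B q (by simp), qTrinomialSum_zero]
  | one => rw [type1GenFun_five, qTrinomialSum_one A B hq]
  | more L ih ih' =>
    rw [type1GenFun_recurrence, qTrinomialSum_recurrence A B hq, ih, ih']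

lemma not_isOfFinOrder_qv : ¬IsOfFinOrder qv := by
  have hinj := IsFractionRing.injective (MvPolynomial (Fin 3) ℚ) K3
  rw [qv, isOfFinOrder_iff_pow_eq_one]
  rintro ⟨n, hn, h⟩
  rw [← map_pow, ← map_one (algebraMap (MvPolynomial (Fin 3) ℚ) K3)] at h
  have hdeg := congrArg MvPolynomial.totalDegree (hinj h)
  rw [MvPolynomial.totalDegree_X_pow, MvPolynomial.totalDegree_one] at hdeg
  omega

lemma trinK_eq_qTrinomial (x : K3) {L i j : ℕ} (h : i + j ≤ L) :
    trinK x i j ((L : ℤ) - i - j) = qTrinomial x i j (L - i - j) := by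
  have hw : (L : ℤ) - i - j = (L - i - j : ℕ) := by omega
  rw [trinK, hw, if_pos (by omega)]
  rfl

theorem type1_generating_function_general {K : Type*} [Field K] (A B : K) {q : K}
    (hq : ¬IsOfFinOrder q) (L : ℕ) :
    (∑ᶠ π ∈ {π : List CPart | IsType1 π ∧ ∀ p ∈ π, p.2 ≤ L},
      A ^ colorCount PColor.a π * B ^ colorCount PColor.b π *
        (A * B) ^ colorCount PColor.ab π * q ^ wt π) =
    ∑ i ∈ range (L + 1), ∑ j ∈ range (L + 1 - i),
      A ^ i * B ^ j * q ^ (tri i + tri j) * qTrinomial q i j (L - i - j) := by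
  rw [← type1RankLE_eq_setOf_le]
  exact type1GenFun_eq_qTrinomialSum A B hq L

/-- Identity (5.3)/(5.4): for `L ≥ 0`, the generating function of Type-1 partitions
with all parts at most `b_L` (i.e. all subscripts `≤ L`), counted with weights
`A^{ν_a} B^{ν_b} (AB)^{ν_{ab}} q^{σ}`, equals
`∑_{i,j ≥ 0, i+j ≤ L} A^i B^j q^{T_i + T_j} [L; i, j, L-i-j]_q`. -/
theorem type1_generating_function (L : ℕ) :
    (∑ᶠ π ∈ {π : List CPart | IsType1 π ∧ ∀ p ∈ π, p.2 ≤ L},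
      Av ^ colorCount PColor.a π * Bv ^ colorCount PColor.b π *
        (Av * Bv) ^ colorCount PColor.ab π * qv ^ wt π) =
    ∑ i ∈ Finset.range (L + 1), ∑ j ∈ Finset.range (L + 1 - i),
      Av ^ i * Bv ^ j * qv ^ (tri i + tri j) * trinK qv (i : ℤ) (j : ℤ) ((L : ℤ) - i - j) := by
  rw [type1_generating_function_general Av Bv not_isOfFinOrder_qv L]
  refine sum_congr rfl fun i _ ↦ sum_congr rfl fun j hj ↦ ?_
  rw [trinK_eq_qTrinomial qv (by grind)]
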